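/- arXiv:2404.15868 — 3 statements merged into one kernel-verified Lean document; each statement's English description precedes it below -/
import Mathlib

section
/- For every n ≥ 1, the unital k-subalgebra of End_k(M^{⊗n}) generated by T₁,…,T_{n−1}, S₁,…,S_{n−1} equals the set of all f ∈ End_k(M^{⊗n}) such that (i) f maps each weight subspace W_j into itself for every 0 ≤ j ≤ n, where W_j is the span of the basis words containing exactly j letters equal to a, and (ii) there exists λ ∈ k with f(a⊗⋯⊗a) = λ·(a⊗⋯⊗a) and f(b⊗⋯⊗b) = λ·(b⊗⋯⊗b) (the same scalar λ on both lines). -/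
/-!
The product `S_i T_i` is diagonal in the basis of words, with eigenvalue `-1` exactly on the words
having `a` at position `i` and `b` at position `i + 1`. As `2` is invertible, the generated algebra
contains the projection onto the span of those words. The `T_i` generate all place permutations,
and conjugating by them gives the projection onto the words with `a` at `p` and `b` at `q`, for
arbitrary `p ≠ q` (`lmul_ind_mem`). For a nonconstant word `w`, the product of these projections
over all pairs with `w p = a`, `w q = b` is the projection onto the line of `w`
(`lmul_single_mem`). Composing with place permutations gives every matrix unit between
nonconstant words of equal weight (`matUnit_mem`). If `f` satisfies (i) and (ii), then
`f - λ • 1` kills the two constant words and preserves weights, hence is a combination of such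
matrix units. The converse inclusion is checked on generators.
-/


noncomputable section

variable (k : Type*) [Field k]

/-- The coordinate model of the `n`-th tensor power `M^{⊗n}` of the `2`-dimensional space
`M = ⟨a,b⟩`: functions on the set of words `w : Fin n → Bool` (a word records, for each tensor
position, which of the two basis letters occurs there; `false` stands for `a`, `true` for `b`).
The basis word `u₁ ⊗ ⋯ ⊗ u_n` corresponds to the delta function at `w`. -/
abbrev TP (n : ℕ) : Type _ := (Fin n → Bool) → k

/-- The basis vector of `M^{⊗n}` corresponding to the word `w` (a delta function). -/
def basisWord (n : ℕ) (w : Fin n → Bool) : TP k n := Pi.single w 1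

/-- The operator `T_i` on `M^{⊗(n+1)}` swapping tensor positions `i` and `i+1`. -/
def Tswap (n : ℕ) (i : Fin n) : Module.End k (TP k (n + 1)) where
  toFun f := fun w => f (w ∘ Equiv.swap i.castSucc i.succ)
  map_add' _ _ := rfl
  map_smul' _ _ := rfl

/-- The operator `S_i` on `M^{⊗(n+1)}` applying the Yetter–Drinfel'd braiding
`σ(a⊗a)=a⊗a`, `σ(a⊗b)=b⊗a`, `σ(b⊗a)=−(a⊗b)`, `σ(b⊗b)=b⊗b` in tensor positions `i`, `i+1`:
on a basis word it swaps the letters at positions `i`, `i+1` and multiplies by `−1` exactly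
when the letter at position `i` is `b` and the letter at position `i+1` is `a`. -/
def Sbraid (n : ℕ) (i : Fin n) : Module.End k (TP k (n + 1)) where
  toFun f := fun w =>
    (if w i.castSucc = false ∧ w i.succ = true then (-1 : k) else 1) *
      f (w ∘ Equiv.swap i.castSucc i.succ)
  map_add' f g := by funext w; simp [mul_add]
  map_smul' c f := by
    funext w
    simp only [Pi.smul_apply, smul_eq_mul, RingHom.id_apply]
    ring

/-- The `j`-th weight subspace `W_j` of `M^{⊗n}`: the span of the basis words containing
exactly `j` letters equal to `a`. -/
def weightSpace (n j : ℕ) : Submodule k (TP k n) :=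
  Submodule.span k
    {v | ∃ w : Fin n → Bool,
      (Finset.univ.filter fun i => w i = false).card = j ∧ v = basisWord k n w}

/-- The subalgebra of `End_k(M^{⊗(n+1)})` generated by all `T_i` and `S_i`. -/
abbrev genAlg (n : ℕ) : Subalgebra k (Module.End k (TP k (n + 1))) :=
  Algebra.adjoin k (Set.range (Tswap k n) ∪ Set.range (Sbraid k n))

/-- The weight of a word: its number of letters `a` (encoded as `false`). -/
def wt {n : ℕ} (w : Fin n → Bool) : ℕ := (Finset.univ.filter fun i => w i = false).card

/-- The action of place permutations on `M^{⊗n}`, with `π` sending a function `f` on words to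
`w ↦ f (w ∘ π)`. -/
def placePerm (n : ℕ) : Equiv.Perm (Fin n) →* Module.End k (TP k n) where
  toFun π := LinearMap.funLeft k k fun w : Fin n → Bool => w ∘ π
  map_one' := rfl
  map_mul' _ _ := rfl

/-- The matrix unit sending the basis word `v` to the basis word `w` and killing all others. -/
def matUnit {n : ℕ} (w v : Fin n → Bool) : Module.End k (TP k n) :=
  LinearMap.single k (fun _ => k) w ∘ₗ LinearMap.proj v

/-- The indicator function of the words with `a` at position `p` and `b` at position `q`. -/
def ind {n : ℕ} (p q : Fin n) : TP k n := fun w => if w p = false ∧ w q = true then 1 else 0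

lemma wt_comp_perm {n : ℕ} (w : Fin n → Bool) (π : Equiv.Perm (Fin n)) : wt (w ∘ π) = wt w := by
  unfold wt
  exact Finset.card_equiv π (by simp)

lemma exists_perm_of_wt_eq {n : ℕ} {w v : Fin n → Bool} (h : wt w = wt v) :
    ∃ π : Equiv.Perm (Fin n), w ∘ π = v := by
  have hc : Fintype.card {i // v i = false} = Fintype.card {i // w i = false} := by
    rw [Fintype.card_subtype, Fintype.card_subtype]
    exact h.symm
  let e := Fintype.equivOfCardEq hc
  refine ⟨e.extendSubtype, funext fun i => ?_⟩
  by_cases hi : v i = false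
  · rw [hi]
    exact e.extendSubtype_mem i hi
  · have := e.extendSubtype_not_mem i hi
    rw [Bool.not_eq_false] at hi this
    rw [hi]
    exact this

lemma mem_weightSpace {n j : ℕ} (v : TP k n) :
    v ∈ weightSpace k n j ↔ ∀ w, wt w ≠ j → v w = 0 := by
  constructor
  · intro hv w hw
    have hle : weightSpace k n j ≤ LinearMap.ker (LinearMap.proj w : TP k n →ₗ[k] k) := by
      refine Submodule.span_le.2 ?_
      rintro _ ⟨u, hu, rfl⟩
      have hne : w ≠ u := by
        rintro rfl
        exact hw hu
      simp [basisWord, hne]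
    exact hle hv
  · intro h
    have hsum : v = ∑ w, v w • basisWord k n w := by
      funext u
      simp [basisWord, Finset.sum_apply, Pi.single_apply]
    rw [hsum]
    refine Submodule.sum_mem _ fun w _ => ?_
    by_cases hw : wt w = j
    · exact Submodule.smul_mem _ _ (Submodule.subset_span ⟨w, hw, rfl⟩)
    · simp [h w hw]

lemma placePerm_mem (n : ℕ) (π : Equiv.Perm (Fin (n + 1))) :
    placePerm k (n + 1) π ∈ genAlg k n := by
  have hle : Submonoid.closure (Set.range fun i : Fin n => Equiv.swap i.castSucc i.succ) ≤
      (genAlg k n).toSubmonoid.comap (placePerm k (n + 1)) := by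
    refine Submonoid.closure_le.2 ?_
    rintro _ ⟨i, rfl⟩
    exact Algebra.subset_adjoin (Or.inl ⟨i, rfl⟩)
  rw [Equiv.Perm.mclosure_swap_castSucc_succ] at hle
  exact hle (Submonoid.mem_top π)

/-- Conjugating a diagonal operator by a place permutation permutes its eigenvalues. -/
lemma lmul_perm_mem {n : ℕ} {d : TP k (n + 1)} (hd : Algebra.lmul k _ d ∈ genAlg k n)
    (π : Equiv.Perm (Fin (n + 1))) :
    Algebra.lmul k (TP k (n + 1)) (fun w => d (w ∘ π)) ∈ genAlg k n := by
  have h : Algebra.lmul k (TP k (n + 1)) (fun w => d (w ∘ π)) =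
      placePerm k (n + 1) π * Algebra.lmul k _ d * placePerm k (n + 1) π⁻¹ := by
    refine LinearMap.ext fun f => funext fun w => ?_
    change d (w ∘ π) * f w = d (w ∘ π) * f ((w ∘ π) ∘ ⇑π⁻¹)
    congr 2
    funext x
    simp
  rw [h]
  exact mul_mem (mul_mem (placePerm_mem k n π) hd) (placePerm_mem k n _)

lemma lmul_ind_adjacent_mem (hchar : ringChar k ≠ 2) {n : ℕ} (i : Fin n) :
    Algebra.lmul k _ (ind k i.castSucc i.succ) ∈ genAlg k n := by
  have h2 : (2 : k) ≠ 0 := Ring.two_ne_zero hchar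
  have h : Algebra.lmul k _ (ind k i.castSucc i.succ) =
      (2 : k)⁻¹ • (1 - Sbraid k n i * Tswap k n i) := by
    refine LinearMap.ext fun f => funext fun w => ?_
    have hw : (w ∘ Equiv.swap i.castSucc i.succ) ∘ Equiv.swap i.castSucc i.succ = w := by
      funext x
      simp
    change (if w i.castSucc = false ∧ w i.succ = true then (1 : k) else 0) * f w =
      (2 : k)⁻¹ * (f w - (if w i.castSucc = false ∧ w i.succ = true then (-1 : k) else 1) *
        f ((w ∘ Equiv.swap i.castSucc i.succ) ∘ Equiv.swap i.castSucc i.succ))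
    rw [hw]
    split_ifs
    · field_simp
      ring
    · ring
  have hS : Sbraid k n i ∈ genAlg k n := Algebra.subset_adjoin (Or.inr ⟨i, rfl⟩)
  have hT : Tswap k n i ∈ genAlg k n := Algebra.subset_adjoin (Or.inl ⟨i, rfl⟩)
  rw [h]
  exact Subalgebra.smul_mem _ (sub_mem (one_mem _) (mul_mem hS hT)) _

lemma lmul_ind_mem (hchar : ringChar k ≠ 2) {n : ℕ} {p q : Fin (n + 1)} (hpq : p ≠ q) :
    Algebra.lmul k _ (ind k p q) ∈ genAlg k n := by
  obtain _ | n := n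
  · exact absurd (Subsingleton.elim (α := Fin 1) p q) hpq
  -- A permutation carrying the adjacent positions `0, 1` to `p, q`.
  let π : Equiv.Perm (Fin (n + 2)) := Equiv.swap 0 p * Equiv.swap 1 (Equiv.swap 0 p q)
  have h0 : π 0 = p := by
    have hne : (0 : Fin (n + 2)) ≠ Equiv.swap 0 p q := by
      intro h
      apply hpq
      have := congrArg (Equiv.swap 0 p) h
      simpa using this
    simp [π, Equiv.swap_apply_of_ne_of_ne (zero_ne_one) hne]
  have h1 : π 1 = q := by simp [π]
  have := lmul_perm_mem k (lmul_ind_adjacent_mem k hchar (0 : Fin (n + 1))) π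
  have he : (fun w => ind k (0 : Fin (n + 1)).castSucc (0 : Fin (n + 1)).succ (w ∘ π)) =
      ind k p q := by
    funext w
    simp [ind, h0, h1]
  rwa [he] at this

lemma lmul_single_mem (hchar : ringChar k ≠ 2) {n : ℕ} {w : Fin (n + 1) → Bool}
    (ha : ∃ p, w p = false) (hb : ∃ q, w q = true) :
    Algebra.lmul k (TP k (n + 1)) (Pi.single w 1) ∈ genAlg k n := by
  have h : (Pi.single w 1 : TP k (n + 1)) =
      ∏ x : Fin (n + 1) × Fin (n + 1) with w x.1 = false ∧ w x.2 = true, ind k x.1 x.2 := by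
    funext v
    rw [Finset.prod_apply]
    by_cases hv : v = w
    · subst hv
      rw [Pi.single_eq_same, Finset.prod_eq_one]
      intro x hx
      exact if_pos (Finset.mem_filter.1 hx).2
    · rw [Pi.single_eq_of_ne hv]
      obtain ⟨p, hp⟩ := ha
      obtain ⟨q, hq⟩ := hb
      obtain ⟨i, hi⟩ := Function.ne_iff.1 hv
      -- A position where `v` and `w` differ, paired with one carrying the other letter in `w`,
      -- gives a vanishing factor.
      symm
      cases hwi : w i
      · exact Finset.prod_eq_zero (i := (i, q)) (by simp [hwi, hq])
          (if_neg fun h => hi (h.1.trans hwi.symm))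
      · exact Finset.prod_eq_zero (i := (p, i)) (by simp [hwi, hp])
          (if_neg fun h => hi (h.2.trans hwi.symm))
  have hmem : (Pi.single w 1 : TP k (n + 1)) ∈
      (genAlg k n).comap (Algebra.lmul k (TP k (n + 1))) := by
    rw [h]
    refine prod_mem fun x hx => lmul_ind_mem k hchar fun hx12 => ?_
    have hx' := (Finset.mem_filter.1 hx).2
    simp [hx12] at hx'
  exact hmem

lemma matUnit_mem (hchar : ringChar k ≠ 2) {n : ℕ} {w v : Fin (n + 1) → Bool}
    (ha : ∃ p, w p = false) (hb : ∃ q, w q = true) (hwv : wt w = wt v) :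
    matUnit k w v ∈ genAlg k n := by
  obtain ⟨π, rfl⟩ := exists_perm_of_wt_eq hwv
  have h : matUnit k w (w ∘ π) =
      Algebra.lmul k (TP k (n + 1)) (Pi.single w 1) * placePerm k (n + 1) π := by
    refine LinearMap.ext fun f => funext fun u => ?_
    change (Pi.single w (f (w ∘ π)) : TP k (n + 1)) u =
      (Pi.single w 1 : TP k (n + 1)) u * f (u ∘ π)
    by_cases hu : u = w
    · subst hu
      simp
    · simp [hu]
  rw [h]
  exact mul_mem (lmul_single_mem k hchar ha hb) (placePerm_mem k n π)

lemma eq_sum_matUnit {n : ℕ} (h : Module.End k (TP k n)) :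
    h = ∑ v, ∑ w, h (basisWord k n v) w • matUnit k w v := by
  refine LinearMap.pi_ext' fun u => LinearMap.ext_ring (funext fun x => ?_)
  simp [matUnit, basisWord, Finset.sum_apply, Pi.single_apply]

/-- An endomorphism that preserves weights and kills the two constant words lies in the generated
algebra. -/
lemma mem_of_kills_const (hchar : ringChar k ≠ 2) {n : ℕ} {h : Module.End k (TP k (n + 1))}
    (hw : ∀ j : ℕ, ∀ v ∈ weightSpace k (n + 1) j, h v ∈ weightSpace k (n + 1) j)
    (h0 : h (basisWord k (n + 1) fun _ => false) = 0)
    (h1 : h (basisWord k (n + 1) fun _ => true) = 0) : h ∈ genAlg k n := by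
  rw [eq_sum_matUnit k h]
  refine sum_mem fun v _ => sum_mem fun w _ => ?_
  by_cases hvw : wt w = wt v
  · by_cases ha : ∃ p, v p = false
    · by_cases hb : ∃ q, v q = true
      · obtain ⟨π, rfl⟩ := exists_perm_of_wt_eq hvw
        exact Subalgebra.smul_mem _ (matUnit_mem k hchar (ha.imp' π fun _ h => h)
          (hb.imp' π fun _ h => h) hvw) _
      · have : v = fun _ => false := by
          funext i
          simpa using not_exists.1 hb i
        simp [this, h0]
    · have : v = fun _ => true := by
        funext i
        simpa using not_exists.1 ha i
      simp [this, h1]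
  · have hmem := hw (wt v) (basisWord k (n + 1) v) (Submodule.subset_span ⟨v, rfl, rfl⟩)
    rw [(mem_weightSpace k _).1 hmem w hvw, zero_smul]
    exact zero_mem _

/-- A generator is a place swap followed by a diagonal sign that is `1` on constant words. -/
lemma generator_spec {n : ℕ} {g : Module.End k (TP k (n + 1))}
    (hg : g ∈ Set.range (Tswap k n) ∪ Set.range (Sbraid k n)) :
    ∃ (d : TP k (n + 1)) (π : Equiv.Perm (Fin (n + 1))), (∀ c, d (fun _ => c) = 1) ∧
      ∀ f w, g f w = d w * f (w ∘ π) := by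
  rcases hg with ⟨i, rfl⟩ | ⟨i, rfl⟩
  · exact ⟨1, Equiv.swap i.castSucc i.succ, fun _ => rfl, fun f w => (one_mul _).symm⟩
  · refine ⟨fun w => if w i.castSucc = false ∧ w i.succ = true then -1 else 1,
      Equiv.swap i.castSucc i.succ, fun c => ?_, fun f w => rfl⟩
    cases c <;> simp

lemma preserves_of_mem {n : ℕ} {f : Module.End k (TP k (n + 1))} (hf : f ∈ genAlg k n) :
    (∀ j : ℕ, ∀ v ∈ weightSpace k (n + 1) j, f v ∈ weightSpace k (n + 1) j) ∧
      ∃ lam : k, ∀ c : Bool, f (basisWord k (n + 1) fun _ => c) =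
        lam • basisWord k (n + 1) fun _ => c := by
  induction hf using Algebra.adjoin_induction with
  | mem g hg =>
    obtain ⟨d, π, hd, hg⟩ := generator_spec k hg
    refine ⟨fun j v hv => ?_, 1, fun c => funext fun w => ?_⟩
    · rw [mem_weightSpace] at hv ⊢
      intro w hw
      rw [hg, hv _ (by rwa [wt_comp_perm]), mul_zero]
    · rw [hg, one_smul]
      by_cases hwc : w = fun _ => c
      · subst hwc
        rw [hd, one_mul]
        rfl
      · have hwc' : w ∘ π ≠ fun _ => c := by
          intro h
          apply hwc
          funext x
          simpa using congrFun h (π⁻¹ x)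
        simp [basisWord, hwc, hwc']
  | algebraMap r =>
    exact ⟨fun j v hv => Submodule.smul_mem _ r hv, r, fun c => rfl⟩
  | add f g _ _ hf hg =>
    obtain ⟨hf, l, hl⟩ := hf
    obtain ⟨hg, m, hm⟩ := hg
    exact ⟨fun j v hv => Submodule.add_mem _ (hf j v hv) (hg j v hv), l + m, fun c => by
      rw [LinearMap.add_apply, hl, hm, add_smul]⟩
  | mul f g _ _ hf hg =>
    obtain ⟨hf, l, hl⟩ := hf
    obtain ⟨hg, m, hm⟩ := hg
    exact ⟨fun j v hv => hf j _ (hg j v hv), m * l, fun c => by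
      rw [Module.End.mul_apply, hm, map_smul, hl, mul_smul]⟩

/-- (char `k ≠ 2`) for every `n ≥ 1` (written `n+1`), the unital `k`-subalgebra
of `End_k(M^{⊗(n+1)})` generated by `T₁,…,T_n, S₁,…,S_n` equals the set of all
`f ∈ End_k(M^{⊗(n+1)})` such that (i) `f` maps each weight subspace `W_j` into itself, and
(ii) there is a single scalar `λ ∈ k` with `f(a⊗⋯⊗a) = λ·(a⊗⋯⊗a)` and
`f(b⊗⋯⊗b) = λ·(b⊗⋯⊗b)`. -/
theorem stmt13 (hchar : ringChar k ≠ 2) (n : ℕ) (f : Module.End k (TP k (n + 1))) :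
    f ∈ Algebra.adjoin k (Set.range (Tswap k n) ∪ Set.range (Sbraid k n)) ↔
      (∀ j : ℕ, ∀ v ∈ weightSpace k (n + 1) j, f v ∈ weightSpace k (n + 1) j) ∧
        ∃ lam : k,
          f (basisWord k (n + 1) (fun _ => false)) =
              lam • basisWord k (n + 1) (fun _ => false) ∧
            f (basisWord k (n + 1) (fun _ => true)) =
              lam • basisWord k (n + 1) (fun _ => true) := by
  constructor
  · intro hf
    obtain ⟨hw, lam, hlam⟩ := preserves_of_mem k hf
    exact ⟨hw, lam, hlam false, hlam true⟩
  · rintro ⟨hw, lam, ha, hb⟩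
    have hmem : f - algebraMap k _ lam ∈ genAlg k n := by
      refine mem_of_kills_const k hchar (fun j v hv => ?_) ?_ ?_
      · exact Submodule.sub_mem _ (hw j v hv) (Submodule.smul_mem _ lam hv)
      · rw [LinearMap.sub_apply, ha]
        exact sub_self _
      · rw [LinearMap.sub_apply, hb]
        exact sub_self _
    have := add_mem hmem (Subalgebra.algebraMap_mem (genAlg k n) lam)
    rwa [sub_add_cancel] at this

end
end

section
/- Let k be a field, m, n ∈ ℕ, let G be the free abelian group of rank m written multiplicatively with generators x₁,…,x_m (i.e., G ≅ ℤ^m), and let A = k[G] be its group algebra. For each matrix s = (s_{ji}) ∈ (ℤ)^{n×m}, let Ψ_s : A^{⊗m} → A^{⊗n} be the k-linear map determined on the group basis by Ψ_s(g₁ ⊗ ⋯ ⊗ g_m) = (∏_{i=1}^m g_i^{s_{1i}}) ⊗ ⋯ ⊗ (∏_{i=1}^m g_i^{s_{ni}}). Then the family (Ψ_s), indexed by all integer matrices s ∈ ℤ^{n×m}, is linearly independent in Hom_k(A^{⊗m}, A^{⊗n}). -/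
open scoped TensorProduct

/-!
Evaluate every `Ψ s` at the single tensor `x₁ ⊗ ⋯ ⊗ x_m` of the free generators of `G`. Its `j`-th
factor becomes the group element `∏ᵢ xᵢ ^ s j i`, whose exponents recover the row `s j`, so distinct
matrices yield distinct members of the basis of `A^{⊗n}` formed by tensors of group elements.
Linear independence of the values at one vector implies that of the maps.
-/

/-- let `k` be a field, `G` the free abelian group of rank `m` written
multiplicatively (realized as `Multiplicative (Fin m →₀ ℤ)`), and `A = k[G]` its group
algebra.  For each integer matrix `s = (s_{ji}) ∈ ℤ^{n×m}`, let `Ψ_s : A^{⊗m} → A^{⊗n}` be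
the `k`-linear map determined on the group basis by
`Ψ_s(g₁ ⊗ ⋯ ⊗ g_m) = (∏ᵢ gᵢ^{s_{1i}}) ⊗ ⋯ ⊗ (∏ᵢ gᵢ^{s_{ni}})`.  Then the family `(Ψ_s)`,
indexed by all `s ∈ ℤ^{n×m}`, is linearly independent in `Hom_k(A^{⊗m}, A^{⊗n})`. -/
theorem stmt18 (k : Type*) [Field k] (m n : ℕ)
    (Ψ : (Fin n → Fin m → ℤ) →
      ((⨂[k] _ : Fin m, MonoidAlgebra k (Multiplicative (Fin m →₀ ℤ))) →ₗ[k]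
        ⨂[k] _ : Fin n, MonoidAlgebra k (Multiplicative (Fin m →₀ ℤ))))
    (hΨ : ∀ (s : Fin n → Fin m → ℤ) (g : Fin m → Multiplicative (Fin m →₀ ℤ)),
      Ψ s (PiTensorProduct.tprod k fun i =>
          MonoidAlgebra.of k (Multiplicative (Fin m →₀ ℤ)) (g i)) =
        PiTensorProduct.tprod k fun j =>
          MonoidAlgebra.of k (Multiplicative (Fin m →₀ ℤ)) (∏ i : Fin m, g i ^ s j i)) :
    LinearIndependent k Ψ := by
  -- `x i` is the `i`-th free generator of `G`.
  let x : Fin m → Multiplicative (Fin m →₀ ℤ) := fun i =>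
    Multiplicative.ofAdd (Finsupp.single i 1)
  refine LinearIndependent.of_comp (LinearMap.applyₗ (PiTensorProduct.tprod k fun i =>
    MonoidAlgebra.of k (Multiplicative (Fin m →₀ ℤ)) (x i))) ?_
  let b := Basis.piTensorProduct fun _ : Fin n =>
    MonoidAlgebra.basis (Multiplicative (Fin m →₀ ℤ)) k
  have hinj : Function.Injective fun (s : Fin n → Fin m → ℤ) (j : Fin n) =>
      ∏ i : Fin m, x i ^ s j i := by
    intro s t hst
    ext j i
    have h := DFunLike.congr_fun (congrArg Multiplicative.toAdd (congrFun hst j)) i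
    simpa [x, toAdd_prod, Finsupp.finsetSum_apply, Finsupp.single_apply] using h
  have hval : (fun s => Ψ s (PiTensorProduct.tprod k fun i =>
      MonoidAlgebra.of k (Multiplicative (Fin m →₀ ℤ)) (x i))) =
      b ∘ fun (s : Fin n → Fin m → ℤ) (j : Fin n) => ∏ i : Fin m, x i ^ s j i := by
    funext s
    rw [hΨ, Function.comp_apply, Basis.piTensorProduct_apply]
    simp only [MonoidAlgebra.basis_apply, MonoidAlgebra.of_apply]
  change LinearIndependent k fun s => Ψ s _
  rw [hval]
  exact b.linearIndependent.comp _ hinj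
end

section
/- Let m, n ∈ ℕ. For each pair (S, K) with S a nonempty subset of {1,…,m} and K a nonempty subset of {1,…,n}, let F_{S,K} : H^{⊗m} → H^{⊗n} be the k-linear map determined on the group basis by F_{S,K}(g₁ ⊗ ⋯ ⊗ g_m) = (if g_i = c for all i ∈ S then 1 else 0)·(v₁ ⊗ ⋯ ⊗ v_n), where v_j = c − 1 for j ∈ K and v_j = 1 for j ∉ K; and let F_* : H^{⊗m} → H^{⊗n} be the map sending every g₁ ⊗ ⋯ ⊗ g_m to 1 ⊗ ⋯ ⊗ 1. Then the family consisting of F_* together with all F_{S,K} is linearly independent in Hom_k(H^{⊗m}, H^{⊗n}); consequently its span has dimension 1 + (2^m − 1)(2^n − 1) = 2^{m+n} − 2^m − 2^n + 2. (This number is the codimension c_{m,n}(kC₂) of the polynomial identities of k[C₂] as a Hopf algebra.) -/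
/-!
The family has a triangular dual family. On `H = k[C₂]` let `ε` be the augmentation and `δ` the
coefficient of `c`. Then `(δ, ε)` is dual to `(c - 1, 1)`, so the functional `dualFun K` on
`H^{⊗n}`, the product of `δ` over `j ∈ K` and `ε` over `j ∉ K`, takes the value `1` at the tensor
`v` attached to `K` and `0` at the tensor attached to any `L ≠ K` (`dualFun_tprod`).

Given a relation `∑ aₓ Fₓ = 0`, evaluating at any group tensor and applying `dualFun ∅` isolates the
coefficient of `F_*`. Evaluating at the group tensor with `c` exactly at the places of `T` and
applying `dualFun K` for nonempty `K` gives `∑_{∅ ≠ S ⊆ T} a_{S,K} = 0`, and induction on `T`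
yields `a_{T,K} = 0`. The dimension is then the cardinality of the index set.
-/

open scoped TensorProduct

/-- The cyclic group of order 2, written multiplicatively. -/
abbrev C2 : Type := Multiplicative (ZMod 2)

/-- The generator `c` of `C₂`. -/
def cC2 : C2 := Multiplicative.ofAdd (1 : ZMod 2)

/-- The linear functional on `k[C₂]` extending a function `w : C₂ → k`. -/
noncomputable def weightFun (k : Type*) [Field k] (w : C2 → k) : MonoidAlgebra k C2 →ₗ[k] k :=
  (Finsupp.linearCombination k w) ∘ₗ (MonoidAlgebra.coeffLinearEquiv k).toLinearMap

lemma weightFun_single (k : Type*) [Field k] (w : C2 → k) (g : C2) :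
    weightFun k w (MonoidAlgebra.single g (1 : k)) = w g := by
  simp [weightFun]

lemma weightFun_one (k : Type*) [Field k] (w : C2 → k) :
    weightFun k w 1 = w 1 := by
  rw [MonoidAlgebra.one_def, weightFun_single]

lemma one_ne_cC2 : (1 : C2) ≠ cC2 := by decide

/-- The functional on `H^{⊗n}` that is the product of the coefficient of `c` at the places of `K`
and the augmentation at the other places. -/
noncomputable def dualFun (k : Type*) [Field k] {n : ℕ} (K : Finset (Fin n)) :
    (⨂[k] _ : Fin n, MonoidAlgebra k C2) →ₗ[k] k :=
  PiTensorProduct.lift ((MultilinearMap.mkPiAlgebra k (Fin n) k).compLinearMap fun j =>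
    weightFun k fun g => if j ∈ K then (if g = cC2 then 1 else 0) else 1)

lemma dualFun_tprod (k : Type*) [Field k] {n : ℕ} (K L : Finset (Fin n)) :
    dualFun k K (PiTensorProduct.tprod k fun j =>
      if j ∈ L then (MonoidAlgebra.single cC2 (1 : k) - 1 : MonoidAlgebra k C2) else 1) =
      if L = K then 1 else 0 := by
  have h1 := one_ne_cC2
  simp only [dualFun, PiTensorProduct.lift.tprod, MultilinearMap.compLinearMap_apply,
    MultilinearMap.mkPiAlgebra_apply]
  have key : ∀ j : Fin n, (weightFun k fun g => if j ∈ K then (if g = cC2 then 1 else 0) else 1)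
      (if j ∈ L then (MonoidAlgebra.single cC2 (1 : k) - 1 : MonoidAlgebra k C2) else 1) =
      if (j ∈ L ↔ j ∈ K) then 1 else 0 := by
    intro j
    by_cases hL : j ∈ L <;> by_cases hK : j ∈ K <;>
      simp [hL, hK, weightFun_single, weightFun_one, h1]
  rw [Finset.prod_congr rfl fun j _ => key j]
  rw [Finset.prod_ite_zero]
  simp [Finset.ext_iff]

lemma dualFun_one (k : Type*) [Field k] {n : ℕ} (K : Finset (Fin n)) :
    dualFun k K (PiTensorProduct.tprod k fun _ => (1 : MonoidAlgebra k C2)) =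
      if ∅ = K then 1 else 0 := by
  simpa using dualFun_tprod k K ∅

set_option maxSynthPendingDepth 3 in
/-- let `k` be a field with `char k ≠ 2` and `H = k[C₂]`.  For each pair `(S,K)`
of nonempty subsets `S ⊆ {1,…,m}`, `K ⊆ {1,…,n}`, let `F_{S,K} : H^{⊗m} → H^{⊗n}` be the
`k`-linear map determined on the group basis by
`F_{S,K}(g₁⊗⋯⊗g_m) = (if gᵢ = c for all i ∈ S then 1 else 0)·(v₁⊗⋯⊗v_n)` with `v_j = c − 1`
for `j ∈ K` and `v_j = 1` otherwise, and let `F_*` send every `g₁⊗⋯⊗g_m` to `1⊗⋯⊗1`.  Then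
the family consisting of `F_*` together with all the `F_{S,K}` is linearly independent in
`Hom_k(H^{⊗m}, H^{⊗n})`, and consequently its span has dimension
`1 + (2^m − 1)(2^n − 1)` `(= 2^{m+n} − 2^m − 2^n + 2)`.  (This number is the codimension
`c_{m,n}(kC₂)` of the polynomial identities of `k[C₂]` as a Hopf algebra.) -/
theorem stmt19 (k : Type*) [Field k] (hchar : ringChar k ≠ 2) (m n : ℕ)
    (F : Option ({S : Finset (Fin m) // S.Nonempty} × {K : Finset (Fin n) // K.Nonempty}) →
      ((⨂[k] _ : Fin m, MonoidAlgebra k C2) →ₗ[k] ⨂[k] _ : Fin n, MonoidAlgebra k C2))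
    (hstar : ∀ g : Fin m → C2,
      F none (PiTensorProduct.tprod k fun i => MonoidAlgebra.single (g i) (1 : k)) =
        PiTensorProduct.tprod k fun _ => (1 : MonoidAlgebra k C2))
    (hSK : ∀ (p : {S : Finset (Fin m) // S.Nonempty} × {K : Finset (Fin n) // K.Nonempty})
        (g : Fin m → C2),
      F (some p) (PiTensorProduct.tprod k fun i => MonoidAlgebra.single (g i) (1 : k)) =
        if ∀ i ∈ p.1.1, g i = cC2 then
          PiTensorProduct.tprod k fun j =>
            if j ∈ p.2.1 then (MonoidAlgebra.single cC2 (1 : k) - 1 : MonoidAlgebra k C2)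
            else 1
        else 0) :
    LinearIndependent k F ∧
      Module.finrank k (Submodule.span k (Set.range F)) =
        1 + (2 ^ m - 1) * (2 ^ n - 1) := by
  have hli : LinearIndependent k F := by
    rw [Fintype.linearIndependent_iff]
    intro a ha
    -- The relation, evaluated at a group tensor and paired with `dualFun K`.
    have hrel : ∀ (K : Finset (Fin n)) (g : Fin m → C2),
        a none * (if ∅ = K then 1 else 0) +
          ∑ p : {S : Finset (Fin m) // S.Nonempty} × {K : Finset (Fin n) // K.Nonempty},
            a (some p) * (if (∀ i ∈ p.1.1, g i = cC2) ∧ p.2.1 = K then 1 else 0) = 0 := by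
      intro K g
      have h := congrArg (fun f => dualFun k K
        (f (PiTensorProduct.tprod k fun i => MonoidAlgebra.single (g i) (1 : k)))) ha
      simp only [LinearMap.add_apply, map_add, LinearMap.sum_apply, LinearMap.smul_apply,
        map_sum, map_smul, LinearMap.zero_apply, map_zero, Fintype.sum_option, hstar, hSK,
        smul_eq_mul, dualFun_one] at h
      refine Eq.trans (congrArg _ ?_) h
      refine Finset.sum_congr rfl fun p _ => ?_
      by_cases hp : ∀ i ∈ p.1.1, g i = cC2
      · rw [if_pos hp, dualFun_tprod]
        by_cases hK : p.2.1 = K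
        · rw [if_pos ⟨hp, hK⟩, if_pos hK]
        · rw [if_neg fun hh => hK hh.2, if_neg hK]
      · rw [if_neg hp, map_zero, if_neg fun hh => hp hh.1]
    have hnone : a none = 0 := by
      have h := hrel ∅ 1
      rw [Finset.sum_eq_zero] at h
      · simpa using h
      · intro p _
        rw [if_neg fun hh => p.2.2.ne_empty hh.2, mul_zero]
    have hsome : ∀ (K : {K : Finset (Fin n) // K.Nonempty}) (T : Finset (Fin m))
        (hT : T.Nonempty), a (some (⟨T, hT⟩, K)) = 0 := by
      intro K T
      induction T using Finset.strongInduction with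
      | H T ih =>
        intro hT
        have h := hrel K.1 fun i => if i ∈ T then cC2 else 1
        rw [hnone, zero_mul, zero_add, Finset.sum_eq_single (⟨T, hT⟩, K)] at h
        · rw [if_pos ⟨fun i hi => if_pos hi, rfl⟩, mul_one] at h
          exact h
        · rintro ⟨⟨S, hS⟩, L⟩ _ hne
          split_ifs with hc
          · obtain ⟨hc, hL⟩ := hc
            obtain rfl : L = K := Subtype.ext hL
            have hST : S ⊆ T := by
              intro i hi
              by_contra hiT
              have := hc i hi
              rw [if_neg hiT] at this
              exact one_ne_cC2 this
            have hne' : S ≠ T := by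
              rintro rfl
              exact hne rfl
            rw [ih S (Finset.ssubset_iff_subset_ne.2 ⟨hST, hne'⟩) hS, zero_mul]
          · rw [mul_zero]
        · intro hh
          exact absurd (Finset.mem_univ _) hh
    rintro (_ | ⟨⟨S, hS⟩, K⟩)
    · exact hnone
    · exact hsome K S hS
  refine ⟨hli, ?_⟩
  have hcard : ∀ r : ℕ, Fintype.card {S : Finset (Fin r) // S.Nonempty} = 2 ^ r - 1 := by
    intro r
    simp only [Finset.nonempty_iff_ne_empty]
    rw [Fintype.card_subtype_compl, Fintype.card_finset, Fintype.card_fin,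
      Fintype.card_subtype_eq]
  rw [finrank_span_eq_card hli, Fintype.card_option, Fintype.card_prod, hcard, hcard, add_comm]
end
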